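/- The encoding pars is injective, and its image is exactly the set of Dyck primes over the alphabet {false, true}; hence pars is a bijection between hereditarily finite sequences and Dyck primes (the balanced parenthesis language). -/

import Mathlib

/-!
A tree and its ordered forest of children are handled together; the code of a forest `ts` is
`ts.flatMap pars`.

* Codes are Dyck primes: by mutual induction, a forest code is balanced and no prefix of it has
  more `true`s than `false`s, and enclosing such a word in `false … true` gives a Dyck prime.
* Injectivity: the code of a tree can be read off unambiguously from the left of any word starting
  with it. A tree code starts with `false`, so the `true` closing a forest marks where it ends
  (`pars_append_cancel`, `flatMap_pars_append_cancel`).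
* Surjectivity: reading a word from right to left, every word which, preceded by `n` opening
  parentheses, is balanced and never closes too early splits into `n + 1` forest codes separated by
  `n` closing parentheses (`SplitsInto`, `splitsInto_of_prefix_le`). With `n = 0`, a Dyck prime is a
  forest code; the code of the first tree is a nonempty balanced prefix, hence the whole word.
-/

inductive HFSeq where
  | node : List HFSeq → HFSeq

open HFSeq

/-- balanced-parenthesis code of a hereditarily finite sequence:
    `pars (node ts) = false :: (ts.flatMap pars) ++ [true]` -/
def pars : HFSeq → List Bool
  | node ts => false :: ((ts.attach.flatMap fun x => pars x.1) ++ [true])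
  decreasing_by
    have h := List.sizeOf_lt_of_mem x.2
    simp only [HFSeq.node.sizeOf_spec]
    omega

/-- A word `w : List Bool` is a Dyck prime if it is nonempty, has as many `false`s
(left parentheses) as `true`s (right parentheses), and every nonempty proper prefix
contains strictly more `false`s than `true`s. -/
def DyckPrime (w : List Bool) : Prop :=
  w ≠ [] ∧ w.count false = w.count true ∧
  ∀ q : List Bool, q <+: w → q ≠ [] → q ≠ w → q.count true < q.count false

/-- `pars` on a node, without the `attach` needed for the termination of its definition. -/
lemma pars_node (ts : List HFSeq) : pars (node ts) = false :: (ts.flatMap pars ++ [true]) := by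
  rw [pars]
  congr 2
  simp [List.flatMap]

mutual

lemma pars_append_cancel : ∀ (s t : HFSeq) (u v : List Bool),
    pars s ++ u = pars t ++ v → s = t ∧ u = v
  | node ss, node ts, u, v, h => by
    simp only [pars_node, List.cons_append, List.append_assoc, List.nil_append,
      List.cons.injEq, true_and] at h
    obtain ⟨h1, h2⟩ := flatMap_pars_append_cancel ss ts u v h
    exact ⟨by rw [h1], h2⟩

lemma flatMap_pars_append_cancel : ∀ (ss ts : List HFSeq) (u v : List Bool),
    ss.flatMap pars ++ true :: u = ts.flatMap pars ++ true :: v → ss = ts ∧ u = v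
  | [], [], u, v, h => by simpa using h
  | [], node _ :: _, u, v, h => by simp [pars_node] at h
  | node _ :: _, [], u, v, h => by simp [pars_node] at h
  | s :: ss, t :: ts, u, v, h => by
    simp only [List.flatMap_cons, List.append_assoc] at h
    obtain ⟨h1, h2⟩ := pars_append_cancel s t _ _ h
    obtain ⟨h3, h4⟩ := flatMap_pars_append_cancel ss ts u v h2
    exact ⟨by rw [h1, h3], h4⟩

end

/-- A balanced word, possibly empty: as many `false`s as `true`s, and no prefix has more `true`s
than `false`s. -/
def BalancedWord (w : List Bool) : Prop :=
  w.count false = w.count true ∧ ∀ q : List Bool, q <+: w → q.count true ≤ q.count false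

lemma BalancedWord.append {u v : List Bool} (hu : BalancedWord u) (hv : BalancedWord v) :
    BalancedWord (u ++ v) := by
  refine ⟨by simp [hu.1, hv.1], fun q hq => ?_⟩
  rcases List.prefix_or_prefix_of_prefix hq (List.prefix_append u v) with h | ⟨r, rfl⟩
  · exact hu.2 q h
  · have h1 := hv.2 r ((List.prefix_append_right_inj u).1 hq)
    have h2 := hu.1
    simp only [List.count_append]
    omega

lemma DyckPrime.balanced {w : List Bool} (hw : DyckPrime w) : BalancedWord w := by
  refine ⟨hw.2.1, fun q hq => ?_⟩
  by_cases h0 : q = []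
  · simp [h0]
  by_cases h1 : q = w
  · rw [h1, hw.2.1]
  · exact (hw.2.2 q hq h0 h1).le

lemma BalancedWord.dyckPrime {u : List Bool} (hu : BalancedWord u) :
    DyckPrime (false :: (u ++ [true])) := by
  refine ⟨by simp, by simp [hu.1], fun q hq h0 h1 => ?_⟩
  rcases List.prefix_cons_iff.1 hq with h | ⟨r, rfl, hr⟩
  · exact absurd h h0
  rcases List.prefix_concat_iff.1 hr with h | h
  · exact absurd (by rw [h]) h1
  · have := hu.2 r h
    simp only [List.count_cons_self, List.count_cons_of_ne (show false ≠ true by decide)]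
    omega

mutual

lemma dyckPrime_pars : ∀ t : HFSeq, DyckPrime (pars t)
  | node ts => by
    rw [pars_node]
    exact (balanced_flatMap_pars ts).dyckPrime

lemma balanced_flatMap_pars : ∀ ts : List HFSeq, BalancedWord (ts.flatMap pars)
  | [] => by simp [BalancedWord]
  | t :: ts => by
    rw [List.flatMap_cons]
    exact (dyckPrime_pars t).balanced.append (balanced_flatMap_pars ts)

end

/-- `SplitsInto n w`: the word `w` consists of `n + 1` forest codes separated by `n` closing
parentheses `true`. -/
def SplitsInto : ℕ → List Bool → Prop
  | 0, w => ∃ ts : List HFSeq, w = ts.flatMap pars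
  | n + 1, w => ∃ (ts : List HFSeq) (rest : List Bool),
      w = ts.flatMap pars ++ true :: rest ∧ SplitsInto n rest

lemma SplitsInto.pars_append {n : ℕ} {w : List Bool} (h : SplitsInto n w) (t : HFSeq) :
    SplitsInto n (pars t ++ w) := by
  cases n with
  | zero =>
    obtain ⟨ts, rfl⟩ := h
    exact ⟨t :: ts, by simp⟩
  | succ n =>
    obtain ⟨ts, rest, rfl, hrest⟩ := h
    exact ⟨t :: ts, rest, by simp, hrest⟩

/-- The hypotheses say that `w` becomes balanced when preceded by `n` opening parentheses. -/
lemma splitsInto_of_prefix_le (w : List Bool) : ∀ n : ℕ, w.count true = n + w.count false →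
    (∀ q : List Bool, q <+: w → q.count true ≤ n + q.count false) → SplitsInto n w := by
  induction w with
  | nil =>
    intro n hn _
    obtain rfl : n = 0 := by simpa using hn.symm
    exact ⟨[], rfl⟩
  | cons b w ih =>
    intro n hn hq
    cases b with
    | true =>
      -- The prefix `[true]` forces an open parenthesis to be available.
      have h1 := hq [true] (by simp)
      cases n with
      | zero => simp at h1
      | succ n =>
        refine ⟨[], w, rfl, ih n ?_ fun q h => ?_⟩
        · simp at hn
          omega
        · have := hq (true :: q) (by simpa using h)
          simp at this
          omega
    | false =>
      obtain ⟨ts, rest, rfl, hrest⟩ := ih (n + 1) (by simp at hn ⊢; omega) fun q h => by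
        have := hq (false :: q) (by simpa using h)
        simp at this
        omega
      -- The new opening parenthesis turns the first forest into a single tree.
      simpa [pars_node] using hrest.pars_append (node ts)

/-- `pars` is injective and its image is exactly the set of Dyck primes; hence it is
a bijection between hereditarily finite sequences and the balanced parenthesis
language. -/
theorem pars_bijection_onto_dyck_primes :
    Function.Injective pars ∧ Set.range pars = {w : List Bool | DyckPrime w} := by
  refine ⟨fun s t h => (pars_append_cancel s t [] [] (by rw [h])).1, Set.ext fun w => ⟨?_, ?_⟩⟩
  · rintro ⟨t, rfl⟩
    exact dyckPrime_pars t
  · intro (hw : DyckPrime w)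
    obtain ⟨ts, hts⟩ := splitsInto_of_prefix_le w 0 (by simp [hw.2.1])
      (by simpa using hw.balanced.2)
    cases ts with
    | nil => exact absurd hts hw.1
    | cons t ts =>
      refine ⟨t, ?_⟩
      by_contra hne
      have ht := dyckPrime_pars t
      have := hw.2.2 (pars t) ⟨ts.flatMap pars, by simp [hts]⟩ ht.1 hne
      exact absurd ht.2.1 this.ne'
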